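/- arXiv:2007.03933 — 2 statements merged into one kernel-verified Lean document; each statement's English description precedes it below -/
import Mathlib

section
/- Let H be a 2-edge-connected undirected graph with a DFS tree T rooted at r, and let u and v be vertices different from r such that M(u) = M(v), v is an ancestor of u, and high(u) is a proper ancestor of v. Then high(u) = high(v). -/
/-- A DFS tree of the graph `H`, rooted at `r`, given by a parent function:
it is a spanning tree (every vertex reaches the root by iterating the parent
function, and each non-root vertex is adjacent to its parent), and every edge
of `H` joins a vertex to one of its ancestors. -/
structure DFSTree {V : Type*} (H : SimpleGraph V) (r : V) where
  par : V → V
  par_root : par r = r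
  reaches_root : ∀ v : V, ∃ n : ℕ, par^[n] v = r
  par_adj : ∀ v : V, v ≠ r → H.Adj v (par v)
  edge_anc : ∀ x y : V, H.Adj x y → (∃ n : ℕ, par^[n] x = y) ∨ (∃ n : ℕ, par^[n] y = x)

namespace DFSTree

variable {V : Type*} {H : SimpleGraph V} {r : V} (T : DFSTree H r)

/-- `a` is an ancestor of `b` (every vertex is an ancestor of itself). -/
def Anc (a b : V) : Prop := ∃ n : ℕ, T.par^[n] b = a

/-- `a` is a proper ancestor of `b`. -/
def PAnc (a b : V) : Prop := T.Anc a b ∧ a ≠ b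

/-- `(x,y)` is a back-edge: an edge of `H` from `x` to an ancestor `y` of `x`
which is not the tree edge from `x` to its parent. -/
def BackEdge (x y : V) : Prop := H.Adj x y ∧ T.Anc y x ∧ T.par x ≠ y

/-- The set of descendants of `v` joined by a back-edge to a proper ancestor of `v`. -/
def MSet (v : V) : Set V := {x | T.Anc v x ∧ ∃ y, T.PAnc y v ∧ T.BackEdge x y}

/-- `m = M(v)`: `m` is the nearest common ancestor of all descendants of `v`
joined by a back-edge to a proper ancestor of `v`. -/
def IsM (v m : V) : Prop :=
  (∀ x ∈ T.MSet v, T.Anc m x) ∧ ∀ m' : V, (∀ x ∈ T.MSet v, T.Anc m' x) → T.Anc m' m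

/-- The set of descendants of `v` joined by a back-edge to a proper ancestor of `p(v)`. -/
def MpSet (v : V) : Set V := {x | T.Anc v x ∧ ∃ y, T.PAnc y (T.par v) ∧ T.BackEdge x y}

/-- `m = M_p(v)`: `m` is the nearest common ancestor of all descendants of `v`
joined by a back-edge to a proper ancestor of `p(v)`. -/
def IsMp (v m : V) : Prop :=
  (∀ x ∈ T.MpSet v, T.Anc m x) ∧ ∀ m' : V, (∀ x ∈ T.MpSet v, T.Anc m' x) → T.Anc m' m

/-- `h = high(v)`: `h` is the deepest proper ancestor of `v` joined by a
back-edge to a descendant of `v`. -/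
def IsHigh (v h : V) : Prop :=
  T.PAnc h v ∧ (∃ x, T.Anc v x ∧ T.BackEdge x h) ∧
    ∀ h' : V, T.PAnc h' v → (∃ x, T.Anc v x ∧ T.BackEdge x h') → T.Anc h' h

/-- `h = high_p(v)`: `h` is the deepest proper ancestor of `p(v)` joined by a
back-edge to a descendant of `v`. -/
def IsHighP (v h : V) : Prop :=
  T.PAnc h (T.par v) ∧ (∃ x, T.Anc v x ∧ T.BackEdge x h) ∧
    ∀ h' : V, T.PAnc h' (T.par v) → (∃ x, T.Anc v x ∧ T.BackEdge x h') → T.Anc h' h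

/-- `l = low(v)`: `l` is the proper ancestor of `v` nearest to the root joined
by a back-edge to a descendant of `v`. -/
def IsLow (v l : V) : Prop :=
  T.PAnc l v ∧ (∃ x, T.Anc v x ∧ T.BackEdge x l) ∧
    ∀ l' : V, T.PAnc l' v → (∃ x, T.Anc v x ∧ T.BackEdge x l') → T.Anc l l'

end DFSTree

/-- `{v, e}` is a vertex-edge cut-pair of `H`: `e` is an edge of `H` and deleting
both `v` (with its incident edges) and `e` disconnects `H`. -/
def VECutPair {V : Type*} (H : SimpleGraph V) (v : V) (e : Sym2 V) : Prop :=
  e ∈ H.edgeSet ∧ ¬ ((H.deleteEdges {e}).induce {u | u ≠ v}).Connected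

/-- `{e, e'}` is a cut-pair of `H`: `e` and `e'` are distinct edges of `H` whose
deletion disconnects `H`. -/
def ECutPair {V : Type*} (H : SimpleGraph V) (e e' : Sym2 V) : Prop :=
  e ∈ H.edgeSet ∧ e' ∈ H.edgeSet ∧ e ≠ e' ∧ ¬ (H.deleteEdges {e, e'}).Connected

/-- An undirected graph is 2-edge-connected if it is connected and has no bridge. -/
def TwoEdgeConnected {W : Type*} (G : SimpleGraph W) : Prop :=
  G.Connected ∧ ∀ e ∈ G.edgeSet, ¬ G.IsBridge e

/-- An undirected graph is 2-vertex-connected if it has at least three vertices,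
is connected, and deleting any single vertex leaves it connected. -/
def TwoVertexConnected {W : Type*} (G : SimpleGraph W) : Prop :=
  3 ≤ Nat.card W ∧ G.Connected ∧ ∀ v : W, (G.induce {u | u ≠ v}).Connected

/-!
A back-edge from a descendant of `u` to `high(u)` also starts at a descendant of `v`, so `high(u)`
is a candidate for `high(v)`. Conversely, every back-edge that joins a descendant of `v` to a proper
ancestor of `v` starts below `M(v) = M(u)`, hence below `u`, so `high(v)` is a candidate for
`high(u)`. Thus `high(u)` and `high(v)` are ancestors of each other.
-/

namespace DFSTree

variable {V : Type*} {H : SimpleGraph V} {r : V} {T : DFSTree H r} {a b c u v m hu hv : V}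

theorem isFixedPt_par_of_mem_periodicPts (hb : b ∈ Function.periodicPts T.par) :
    Function.IsFixedPt T.par b := by
  obtain ⟨n, hn⟩ := T.reaches_root b
  rw [← Function.minimalPeriod_eq_one_iff_isFixedPt, ← Function.minimalPeriod_apply_iterate hb n,
    hn, Function.minimalPeriod_eq_one_iff_isFixedPt]
  exact T.par_root

theorem Anc.trans (hab : T.Anc a b) (hbc : T.Anc b c) : T.Anc a c := by
  obtain ⟨n, rfl⟩ := hab
  obtain ⟨k, rfl⟩ := hbc
  exact ⟨n + k, Function.iterate_add_apply _ _ _ _⟩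

theorem Anc.antisymm (hab : T.Anc a b) (hba : T.Anc b a) : a = b := by
  obtain ⟨n, rfl⟩ := hab
  obtain ⟨k, hk⟩ := hba
  rcases Nat.eq_zero_or_pos n with rfl | hn
  · rfl
  · have hperiodic : b ∈ Function.periodicPts T.par :=
      ⟨k + n, Nat.add_pos_right k hn, (Function.iterate_add_apply _ _ _ _).trans hk⟩
    exact (isFixedPt_par_of_mem_periodicPts hperiodic).iterate n

theorem PAnc.trans_anc (hab : T.PAnc a b) (hbc : T.Anc b c) : T.PAnc a c := by
  refine ⟨hab.1.trans hbc, ?_⟩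
  rintro rfl
  exact hab.2 (hab.1.antisymm hbc)

theorem IsM.anc (hm : T.IsM v m) : T.Anc v m :=
  hm.2 v fun _ hx => hx.1

theorem IsHigh.anc_of_pAnc (hhu : T.IsHigh u hu) (hhv : T.IsHigh v hv) (hvu : T.Anc v u)
    (hpa : T.PAnc hu v) : T.Anc hu hv := by
  obtain ⟨-, ⟨x, hux, hback⟩, -⟩ := hhu
  exact hhv.2.2 hu hpa ⟨x, hvu.trans hux, hback⟩

theorem IsHigh.anc_of_forall_mem_mSet (hhu : T.IsHigh u hu) (hhv : T.IsHigh v hv)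
    (hvu : T.Anc v u) (hM : ∀ x ∈ T.MSet v, T.Anc u x) : T.Anc hv hu := by
  obtain ⟨hpa, ⟨x, hvx, hback⟩, -⟩ := hhv
  have hux : T.Anc u x := hM x ⟨hvx, hv, hpa, hback⟩
  exact hhu.2.2 hv (hpa.trans_anc hvu) ⟨x, hux, hback⟩

end DFSTree

theorem stmt_18_general {V : Type*} {H : SimpleGraph V} {r : V} {T : DFSTree H r}
    {u v hgu hgv : V} (hM : ∀ x ∈ T.MSet v, T.Anc u x) (hanc : T.Anc v u)
    (hhgu : T.IsHigh u hgu) (hhgv : T.IsHigh v hgv) (hpa : T.PAnc hgu v) : hgu = hgv :=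
  (hhgu.anc_of_pAnc hhgv hanc hpa).antisymm (hhgu.anc_of_forall_mem_mSet hhgv hanc hM)

theorem stmt_18 {V : Type*} [Fintype V] (H : SimpleGraph V) (r : V)
    (T : DFSTree H r) (hH : TwoEdgeConnected H) (u v m hgu hgv : V)
    (hur : u ≠ r) (hvr : v ≠ r)
    (hmu : T.IsM u m) (hmv : T.IsM v m) (hanc : T.Anc v u)
    (hhgu : T.IsHigh u hgu) (hhgv : T.IsHigh v hgv)
    (hpa : T.PAnc hgu v) :
    hgu = hgv :=
  stmt_18_general (fun x hx => hmu.anc.trans (hmv.1 x hx)) hanc hhgu hhgv hpa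
end

section
/- Let H be a 2-edge-connected undirected graph with a DFS tree T rooted at r. For a vertex w ≠ r let S(w) denote the set consisting of w together with all vertices x ≠ r such that {(w,p(w)),(x,p(x))} is a cut-pair of H. Then for every vertex u ≠ r and every v ∈ S(u), it holds that S(v) = S(u). -/
/-!
In a 2-edge-connected graph two distinct edges form a cut-pair exactly when together they are the
boundary of a vertex set. Boundaries are closed under symmetric difference and
`{e, f} ∆ {f, g} = {e, g}`, so being equal or a cut-pair is an equivalence relation on edges. As a
vertex is determined by the edge to its parent, `S w` is the class of the parent edge of `w`.
-/

open scoped symmDiff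

section EdgeBoundary

variable {V : Type*} {G : SimpleGraph V} {X Y : Set V} {a b : V}

/-- The edge boundary of the vertex set `X`, also called the cut (or coboundary) of `X`: the edges
of `G` with exactly one end in `X`. -/
def edgeBoundary (G : SimpleGraph V) (X : Set V) : Set (Sym2 V) :=
  {e ∈ G.edgeSet | ∃ a ∈ X, ∃ b ∉ X, e = s(a, b)}

theorem edgeBoundary_subset_edgeSet : edgeBoundary G X ⊆ G.edgeSet :=
  fun _ he => he.1

theorem mk_mem_edgeBoundary :
    s(a, b) ∈ edgeBoundary G X ↔ G.Adj a b ∧ ¬(a ∈ X ↔ b ∈ X) := by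
  simp only [edgeBoundary, Set.mem_ofPred_eq, SimpleGraph.mem_edgeSet, Sym2.eq_iff]
  grind

theorem edgeBoundary_deleteEdges (F : Set (Sym2 V)) :
    edgeBoundary (G.deleteEdges F) X = edgeBoundary G X \ F := by
  ext e
  simp only [edgeBoundary, SimpleGraph.edgeSet_deleteEdges, Set.mem_ofPred_eq, Set.mem_sdiff]
  tauto

theorem edgeBoundary_symmDiff :
    edgeBoundary G (X ∆ Y) = edgeBoundary G X ∆ edgeBoundary G Y := by
  ext ⟨a, b⟩
  simp only [Set.mem_symmDiff, mk_mem_edgeBoundary]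
  tauto

theorem reachable_iff_forall_edgeBoundary_eq_empty :
    G.Reachable a b ↔ ∀ X, edgeBoundary G X = ∅ → (a ∈ X ↔ b ∈ X) := by
  refine ⟨fun hab X hX => ?_, fun h => ?_⟩
  · have mem_of_mem {x y : V} (hxy : G.Reachable x y) (hx : x ∈ X) : y ∈ X := by
      by_contra hy
      obtain ⟨⟨⟨u, v⟩, huv⟩, -, hu, hv⟩ := hxy.some.exists_boundary_dart X hx hy
      exact Set.eq_empty_iff_forall_notMem.1 hX s(u, v) ⟨huv, u, hu, v, hv, rfl⟩
    exact ⟨mem_of_mem hab, mem_of_mem hab.symm⟩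
  · have component_boundary : edgeBoundary G {x | G.Reachable a x} = ∅ := by
      refine Set.eq_empty_iff_forall_notMem.2 ?_
      rintro _ ⟨huv, u, hu, v, hv, rfl⟩
      exact hv (hu.trans (SimpleGraph.Adj.reachable huv))
    exact (h _ component_boundary).1 (SimpleGraph.Reachable.refl a)

theorem isBridge_of_edgeBoundary_eq_singleton {e : Sym2 V} (hX : edgeBoundary G X = {e}) :
    G.IsBridge e := by
  induction e with | _ a b
  have separated : ¬(a ∈ X ↔ b ∈ X) :=
    (mk_mem_edgeBoundary.1 (hX ▸ Set.mem_singleton s(a, b))).2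
  rw [SimpleGraph.isBridge_iff, reachable_iff_forall_edgeBoundary_eq_empty]
  intro h
  exact separated (h X (by rw [edgeBoundary_deleteEdges, hX, Set.sdiff_self]))

end EdgeBoundary

section CutPairEquiv

variable {V : Type*} {H : SimpleGraph V} {e f g : Sym2 V}

theorem ECutPair.exists_edgeBoundary_eq (hH : TwoEdgeConnected H) (hef : ECutPair H e f) :
    ∃ X, edgeBoundary H X = {e, f} := by
  obtain ⟨he, hf, -, disconnected⟩ := hef
  have : Nonempty V := hH.1.nonempty
  obtain ⟨x, y, hxy⟩ : ∃ x y, ¬(H.deleteEdges {e, f}).Reachable x y := by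
    by_contra! h
    exact disconnected ⟨h⟩
  obtain ⟨X, hX, separated⟩ :
      ∃ X, edgeBoundary (H.deleteEdges {e, f}) X = ∅ ∧ ¬(x ∈ X ↔ y ∈ X) := by
    simpa only [reachable_iff_forall_edgeBoundary_eq_empty, not_forall, exists_prop] using hxy
  rw [edgeBoundary_deleteEdges, Set.sdiff_eq_empty, Set.subset_pair_iff_eq] at hX
  rcases hX with empty | single | single | pair
  · have hxy : H.Reachable x y := hH.1.preconnected x y
    exact absurd (reachable_iff_forall_edgeBoundary_eq_empty.1 hxy X empty) separated
  · exact absurd (isBridge_of_edgeBoundary_eq_singleton single) (hH.2 e he)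
  · exact absurd (isBridge_of_edgeBoundary_eq_singleton single) (hH.2 f hf)
  · exact ⟨X, pair⟩

theorem ECutPair.of_edgeBoundary_eq {X : Set V} (hef : e ≠ f) (hX : edgeBoundary H X = {e, f}) :
    ECutPair H e f := by
  have he : e ∈ edgeBoundary H X := hX ▸ Set.mem_insert e {f}
  have hf : f ∈ edgeBoundary H X := hX ▸ Set.mem_insert_of_mem e rfl
  refine ⟨edgeBoundary_subset_edgeSet he, edgeBoundary_subset_edgeSet hf, hef, fun connected => ?_⟩
  obtain ⟨-, a, ha, b, hb, -⟩ := he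
  have boundary_empty : edgeBoundary (H.deleteEdges {e, f}) X = ∅ := by
    rw [edgeBoundary_deleteEdges, hX, Set.sdiff_self]
  have hab : (H.deleteEdges {e, f}).Reachable a b := connected.preconnected a b
  exact hb ((reachable_iff_forall_edgeBoundary_eq_empty.1 hab X boundary_empty).1 ha)

theorem ECutPair.symm (hef : ECutPair H e f) : ECutPair H f e :=
  ⟨hef.2.1, hef.1, hef.2.2.1.symm, Set.pair_comm e f ▸ hef.2.2.2⟩

theorem ECutPair.trans (hH : TwoEdgeConnected H) (hef : ECutPair H e f) (hfg : ECutPair H f g)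
    (heg : e ≠ g) : ECutPair H e g := by
  obtain ⟨X, hX⟩ := hef.exists_edgeBoundary_eq hH
  obtain ⟨Y, hY⟩ := hfg.exists_edgeBoundary_eq hH
  have pair_symmDiff : ({e, f} : Set (Sym2 V)) ∆ {f, g} = {e, g} := by
    have e_ne_f : e ≠ f := hef.2.2.1
    have f_ne_g : f ≠ g := hfg.2.2.1
    ext x
    grind
  exact .of_edgeBoundary_eq (X := X ∆ Y) heg (by rw [edgeBoundary_symmDiff, hX, hY, pair_symmDiff])

/-- The reflexive closure of the cut-pair relation, an equivalence relation when the graph is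
2-edge-connected. It also relates a non-edge of `H` to itself. -/
def CutPairEquiv (H : SimpleGraph V) (e f : Sym2 V) : Prop := e = f ∨ ECutPair H e f

theorem CutPairEquiv.symm (hef : CutPairEquiv H e f) : CutPairEquiv H f e :=
  hef.imp Eq.symm ECutPair.symm

theorem CutPairEquiv.trans (hH : TwoEdgeConnected H) (hef : CutPairEquiv H e f)
    (hfg : CutPairEquiv H f g) : CutPairEquiv H e g := by
  rcases hef with rfl | hef
  · exact hfg
  rcases hfg with rfl | hfg
  · exact .inr hef
  exact or_iff_not_imp_left.2 (hef.trans hH hfg)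

end CutPairEquiv

section ParentEdge

variable {V : Type*} {r : V} {par : V → V}

theorem parentEdge_injective (par_root : par r = r) (reaches_root : ∀ v, ∃ n : ℕ, par^[n] v = r) :
    Function.Injective fun v => s(v, par v) := by
  intro x y hxy
  rcases Sym2.eq_iff.1 hxy with ⟨h, -⟩ | ⟨hx, hy⟩
  · exact h
  have x_periodic : x ∈ Function.periodicPts par :=
    Function.mk_mem_periodicPts two_pos (show par (par x) = x from hy ▸ hx.symm)
  obtain ⟨n, hn⟩ := reaches_root x
  -- A periodic point whose orbit meets a fixed point is itself fixed.
  have x_fixed : par x = x :=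
    Function.isPeriodicPt_of_mem_periodicPts_of_isPeriodicPt_iterate (m := 1) x_periodic
      (hn.symm ▸ par_root)
  exact x_fixed.symm.trans hy

theorem mem_singleton_union_cutPairs_iff {H : SimpleGraph V} (par_root : par r = r)
    (reaches_root : ∀ v, ∃ n : ℕ, par^[n] v = r) {w x : V} :
    x ∈ {w} ∪ {y : V | y ≠ r ∧ ECutPair H s(w, par w) s(y, par y)} ↔
      CutPairEquiv H s(w, par w) s(x, par x) := by
  have ne_root (h : ECutPair H s(w, par w) s(x, par x)) : x ≠ r := by
    rintro rfl
    exact (H.mem_edgeSet.1 h.2.1).ne par_root.symm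
  have edge_eq_iff : s(w, par w) = s(x, par x) ↔ x = w :=
    (parentEdge_injective par_root reaches_root).eq_iff.trans eq_comm
  rw [CutPairEquiv, edge_eq_iff]
  exact or_congr Iff.rfl (and_iff_right_of_imp ne_root)

end ParentEdge

theorem stmt_19_general {V : Type*} (H : SimpleGraph V) (r : V) (par : V → V)
    (par_root : par r = r) (reaches_root : ∀ v : V, ∃ n : ℕ, par^[n] v = r)
    (hH : TwoEdgeConnected H) (S : V → Set V)
    (hS : ∀ w : V, S w = {w} ∪ {x : V | x ≠ r ∧ ECutPair H s(w, par w) s(x, par x)}) :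
    ∀ u : V, ∀ v ∈ S u, S v = S u := by
  have mem_S (w x : V) : x ∈ S w ↔ CutPairEquiv H s(w, par w) s(x, par x) := by
    rw [hS, mem_singleton_union_cutPairs_iff par_root reaches_root]
  intro u v hv
  have huv := (mem_S u v).1 hv
  ext x
  rw [mem_S, mem_S]
  exact ⟨huv.trans hH, huv.symm.trans hH⟩

theorem stmt_19 {V : Type*} [Fintype V] (H : SimpleGraph V) (r : V)
    (T : DFSTree H r) (hH : TwoEdgeConnected H)
    (S : V → Set V)
    (hS : ∀ w : V, S w =
      {w} ∪ {x : V | x ≠ r ∧ ECutPair H s(w, T.par w) s(x, T.par x)}) :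
    ∀ u : V, u ≠ r → ∀ v ∈ S u, S v = S u := by
  exact fun u _ => stmt_19_general H r T.par T.par_root T.reaches_root hH S hS u
end
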